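/- arXiv:2509.22743 — 3 statements merged into one kernel-verified Lean document; each statement's English description precedes it below -/
import Mathlib

section
/- For every positive integer n, M_n(ℝ) is the internal direct sum ⟨DS_n⟩ ⊕ R_n ⊕ C_n: every A ∈ M_n(ℝ) can be written as A = A₁ + A₂ + A₃ with A₁ ∈ ⟨DS_n⟩, A₂ ∈ R_n, A₃ ∈ C_n, and whenever A₁ + A₂ + A₃ = 0 with A₁ ∈ ⟨DS_n⟩, A₂ ∈ R_n, A₃ ∈ C_n, one has A₁ = A₂ = A₃ = 0. -/
/-!
Existence is the splitting `A = partDS A + partR A + partC A`. The vectors `r(A)` and `c(A)` sum to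
zero because `s_A` is the mean of the column averages and of the row averages, and subtracting
`A_R` and `A_C` replaces every row sum and every column sum by the common value `n * s_A`.

For uniqueness, let `A₁ + e vᵀ + w eᵀ = 0`, where `A₁` has all row and column sums equal to `c`.
Row sums give `c + n w_i = 0` since `v` sums to zero. Hence `w` is constant and, having sum zero,
vanishes; column sums give `v = 0` in the same way, and then `A₁ = 0`.
-/

open Matrix

/-- Membership in `⟨DS_n⟩`: `∃ c, A e = c e ∧ Aᵀ e = c e`, where `e` is the all-ones vector. -/
def InSpanDS {n : ℕ} (A : Matrix (Fin n) (Fin n) ℝ) : Prop :=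
  ∃ c : ℝ, A *ᵥ (fun _ => (1:ℝ)) = c • (fun _ => (1:ℝ)) ∧
    Aᵀ *ᵥ (fun _ => (1:ℝ)) = c • (fun _ => (1:ℝ))

/-- Membership in `⟨RS_n⟩`: `∃ c, A e = c e`. -/
def InSpanRS {n : ℕ} (A : Matrix (Fin n) (Fin n) ℝ) : Prop :=
  ∃ c : ℝ, A *ᵥ (fun _ => (1:ℝ)) = c • (fun _ => (1:ℝ))

/-- Membership in `R_n = {e vᵀ : vᵀ e = 0}`. -/
def InRn {n : ℕ} (A : Matrix (Fin n) (Fin n) ℝ) : Prop :=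
  ∃ v : Fin n → ℝ, (∑ i, v i) = 0 ∧ A = vecMulVec (fun _ => (1:ℝ)) v

/-- Membership in `C_n = {v eᵀ : vᵀ e = 0}`. -/
def InCn {n : ℕ} (A : Matrix (Fin n) (Fin n) ℝ) : Prop :=
  ∃ v : Fin n → ℝ, (∑ i, v i) = 0 ∧ A = vecMulVec v (fun _ => (1:ℝ))

/-- `A` is doubly stochastic. -/
def IsDS {n : ℕ} (A : Matrix (Fin n) (Fin n) ℝ) : Prop :=
  (∀ i j, 0 ≤ A i j) ∧ (∀ i, ∑ j, A i j = 1) ∧ (∀ j, ∑ i, A i j = 1)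

/-- `A` is row stochastic. -/
def IsRS {n : ℕ} (A : Matrix (Fin n) (Fin n) ℝ) : Prop :=
  (∀ i j, 0 ≤ A i j) ∧ (∀ i, ∑ j, A i j = 1)

/-- `A` is column stochastic. -/
def IsCS {n : ℕ} (A : Matrix (Fin n) (Fin n) ℝ) : Prop :=
  (∀ i j, 0 ≤ A i j) ∧ (∀ j, ∑ i, A i j = 1)

/-- `A` is a permutation matrix. -/
def IsPerm {n : ℕ} (A : Matrix (Fin n) (Fin n) ℝ) : Prop :=
  ∃ σ : Equiv.Perm (Fin n), A = σ.permMatrix ℝ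

/-- `s_A = (Σ_{i,j} a_{ij})/n²`. -/
noncomputable def sAvg {n : ℕ} (A : Matrix (Fin n) (Fin n) ℝ) : ℝ :=
  (∑ i, ∑ j, A i j) / (n ^ 2 : ℝ)

/-- `r(A)` with `i`-th entry `(Σ_k a_{ki})/n − s_A`. -/
noncomputable def rVec {n : ℕ} (A : Matrix (Fin n) (Fin n) ℝ) : Fin n → ℝ :=
  fun i => (∑ k, A k i) / (n : ℝ) - sAvg A

/-- `c(A)` with `i`-th entry `(Σ_k a_{ik})/n − s_A`. -/
noncomputable def cVec {n : ℕ} (A : Matrix (Fin n) (Fin n) ℝ) : Fin n → ℝ :=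
  fun i => (∑ k, A i k) / (n : ℝ) - sAvg A

/-- `A_R = e · r(A)ᵀ`. -/
noncomputable def partR {n : ℕ} (A : Matrix (Fin n) (Fin n) ℝ) : Matrix (Fin n) (Fin n) ℝ :=
  vecMulVec (fun _ => (1:ℝ)) (rVec A)

/-- `A_C = c(A) · eᵀ`. -/
noncomputable def partC {n : ℕ} (A : Matrix (Fin n) (Fin n) ℝ) : Matrix (Fin n) (Fin n) ℝ :=
  vecMulVec (cVec A) (fun _ => (1:ℝ))

/-- `A_DS = A − A_R − A_C`. -/
noncomputable def partDS {n : ℕ} (A : Matrix (Fin n) (Fin n) ℝ) : Matrix (Fin n) (Fin n) ℝ :=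
  A - partR A - partC A

theorem sum_rVec {n : ℕ} (hn : 0 < n) (A : Matrix (Fin n) (Fin n) ℝ) : ∑ i, rVec A i = 0 := by
  have h : (n : ℝ) ≠ 0 := by positivity
  simp only [rVec, sAvg, Finset.sum_sub_distrib, ← Finset.sum_div, Finset.sum_const,
    Finset.card_univ, Fintype.card_fin, nsmul_eq_mul]
  rw [Finset.sum_comm]
  field_simp
  ring

theorem sum_cVec {n : ℕ} (hn : 0 < n) (A : Matrix (Fin n) (Fin n) ℝ) : ∑ i, cVec A i = 0 := by
  have h : (n : ℝ) ≠ 0 := by positivity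
  simp only [cVec, sAvg, Finset.sum_sub_distrib, ← Finset.sum_div, Finset.sum_const,
    Finset.card_univ, Fintype.card_fin, nsmul_eq_mul]
  field_simp
  ring

theorem inSpanDS_iff {n : ℕ} (A : Matrix (Fin n) (Fin n) ℝ) :
    InSpanDS A ↔ ∃ c : ℝ, (∀ i, ∑ j, A i j = c) ∧ ∀ j, ∑ i, A i j = c := by
  simp [InSpanDS, funext_iff, mulVec, dotProduct]

theorem inSpanDS_partDS {n : ℕ} (hn : 0 < n) (A : Matrix (Fin n) (Fin n) ℝ) :
    InSpanDS (partDS A) := by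
  have h : (n : ℝ) ≠ 0 := by positivity
  refine (inSpanDS_iff _).2 ⟨n * sAvg A, fun i => ?_, fun j => ?_⟩
  · simp only [partDS, partR, partC, Matrix.sub_apply, vecMulVec_apply, one_mul, mul_one,
      Finset.sum_sub_distrib, sum_rVec hn, Finset.sum_const, Finset.card_univ, Fintype.card_fin,
      nsmul_eq_mul, cVec]
    field_simp
    ring
  · simp only [partDS, partR, partC, Matrix.sub_apply, vecMulVec_apply, one_mul, mul_one,
      Finset.sum_sub_distrib, sum_cVec hn, Finset.sum_const, Finset.card_univ, Fintype.card_fin,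
      nsmul_eq_mul, rVec]
    field_simp
    ring

/-- The common step for rows and columns in the uniqueness argument: the relation forces `w` to be
constant, and a constant vector with sum zero vanishes. -/
theorem eq_zero_of_const_add_mul {n : ℕ} (hn : 0 < n) {c : ℝ} {w : Fin n → ℝ} (hw : ∑ i, w i = 0)
    (h : ∀ i, c + n * w i = 0) : w = 0 := by
  have hsum : ∑ i, (c + n * w i) = 0 := Finset.sum_eq_zero fun i _ => h i
  rw [Finset.sum_add_distrib, ← Finset.mul_sum, hw] at hsum
  have hc : c = 0 := by simpa [hn.ne'] using hsum
  funext i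
  simpa [hc, hn.ne'] using h i

theorem stmt1 (n : ℕ) (hn : 0 < n) :
    (∀ A : Matrix (Fin n) (Fin n) ℝ, ∃ A₁ A₂ A₃ : Matrix (Fin n) (Fin n) ℝ,
      InSpanDS A₁ ∧ InRn A₂ ∧ InCn A₃ ∧ A = A₁ + A₂ + A₃) ∧
    (∀ A₁ A₂ A₃ : Matrix (Fin n) (Fin n) ℝ, InSpanDS A₁ → InRn A₂ → InCn A₃ →
      A₁ + A₂ + A₃ = 0 → A₁ = 0 ∧ A₂ = 0 ∧ A₃ = 0) := by
  refine ⟨fun A => ⟨partDS A, partR A, partC A, inSpanDS_partDS hn A,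
    ⟨rVec A, sum_rVec hn A, rfl⟩, ⟨cVec A, sum_cVec hn A, rfl⟩, ?_⟩, ?_⟩
  · simp only [partDS]
    abel
  · rintro A₁ _ _ h₁ ⟨v, hv, rfl⟩ ⟨w, hw, rfl⟩ h
    obtain ⟨c, hr, hc⟩ := (inSpanDS_iff A₁).1 h₁
    have hij : ∀ i j, A₁ i j + v j + w i = 0 := fun i j => by
      simpa [vecMulVec_apply] using congrFun (congrFun h i) j
    have hw0 : w = 0 := eq_zero_of_const_add_mul hn (c := c) hw fun i => by
      have := Finset.sum_eq_zero fun j (_ : j ∈ Finset.univ) => hij i j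
      simpa [Finset.sum_add_distrib, hr, hv] using this
    have hv0 : v = 0 := eq_zero_of_const_add_mul hn (c := c) hv fun j => by
      have := Finset.sum_eq_zero fun i (_ : i ∈ Finset.univ) => hij i j
      simpa [Finset.sum_add_distrib, hc, hw] using this
    subst hw0 hv0
    refine ⟨?_, by ext; simp [vecMulVec_apply], by ext; simp [vecMulVec_apply]⟩
    ext i j
    simpa using hij i j
end

section
/- Let A ∈ ⟨RS_n⟩ be invertible. Then A_DS is invertible, A⁻¹ ∈ ⟨RS_n⟩, and (A⁻¹)_DS = (A_DS)⁻¹. In particular, if A ∈ ⟨DS_n⟩ is invertible then A⁻¹ ∈ ⟨DS_n⟩. -/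
/-! Let `e` be the all-ones vector and `J = e eᵀ / n`, the idempotent averaging matrix. If
`A e = c e`, then `A_C = 0` and `A_R = J A - c J`, so `A_DS = A - J A + c J`
(`partDS_eq_of_mulVec_one`). Moreover an invertible such `A` has `c ≠ 0` and `A⁻¹ e = c⁻¹ e`.
Using `J² = J`, `A J = c J` and `A⁻¹ J = c⁻¹ J`, the product of `A - J A + c J` and
`A⁻¹ - J A⁻¹ + c⁻¹ J` expands to `1`, so `A_DS` and `(A⁻¹)_DS` are mutually inverse. The doubly
stochastic case follows by applying the eigenvector statement to `A` and to `Aᵀ`, with the same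
eigenvalue `c`. -/

open Matrix

/-- The averaging matrix `J = e eᵀ / n`. -/
noncomputable def avgMat (n : ℕ) : Matrix (Fin n) (Fin n) ℝ :=
  fun _ _ => (n : ℝ)⁻¹

lemma avgMat_mul_self {n : ℕ} (hn : 0 < n) : avgMat n * avgMat n = avgMat n := by
  have hn' : (n : ℝ) ≠ 0 := by positivity
  ext i j
  simp [Matrix.mul_apply, avgMat, hn']

lemma row_sum_of_mulVec_one {n : ℕ} {A : Matrix (Fin n) (Fin n) ℝ} {c : ℝ}
    (h : A *ᵥ (fun _ => (1:ℝ)) = c • (fun _ => (1:ℝ))) (i : Fin n) : ∑ j, A i j = c := by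
  have := congrFun h i
  simpa [Matrix.mulVec, dotProduct] using this

lemma mul_avgMat {n : ℕ} {A : Matrix (Fin n) (Fin n) ℝ} {c : ℝ}
    (h : A *ᵥ (fun _ => (1:ℝ)) = c • (fun _ => (1:ℝ))) : A * avgMat n = c • avgMat n := by
  ext i j
  simp [Matrix.mul_apply, avgMat, ← Finset.sum_mul, row_sum_of_mulVec_one h]

lemma partDS_eq_of_mulVec_one {n : ℕ} (hn : 0 < n) {A : Matrix (Fin n) (Fin n) ℝ} {c : ℝ}
    (h : A *ᵥ (fun _ => (1:ℝ)) = c • (fun _ => (1:ℝ))) :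
    partDS A = A - avgMat n * A + c • avgMat n := by
  have hn' : (n : ℝ) ≠ 0 := by positivity
  have hs : sAvg A = c / n := by
    simp only [sAvg, row_sum_of_mulVec_one h, Finset.sum_const, Finset.card_univ,
      Fintype.card_fin, nsmul_eq_mul]
    field_simp
  ext i j
  simp only [partDS, partR, partC, Matrix.sub_apply, Matrix.add_apply, Matrix.smul_apply,
    vecMulVec_apply, rVec, cVec, hs, row_sum_of_mulVec_one h, Matrix.mul_apply, avgMat,
    ← Finset.mul_sum, smul_eq_mul]
  field_simp
  ring

/-- An eigenvalue of an invertible matrix for the all-ones vector (nonzero since `0 < n`) is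
nonzero, and its inverse is an eigenvalue of the inverse matrix for the same vector. -/
lemma inv_mulVec_one {n : ℕ} (hn : 0 < n) {A : Matrix (Fin n) (Fin n) ℝ} {c : ℝ}
    (hinv : IsUnit A) (h : A *ᵥ (fun _ => (1:ℝ)) = c • (fun _ => (1:ℝ))) :
    c ≠ 0 ∧ A⁻¹ *ᵥ (fun _ => (1:ℝ)) = c⁻¹ • (fun _ => (1:ℝ)) := by
  have hdet : IsUnit A.det := (Matrix.isUnit_iff_isUnit_det A).1 hinv
  have h1 : (fun _ => (1:ℝ)) = c • (A⁻¹ *ᵥ (fun _ : Fin n => (1:ℝ))) := by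
    rw [← Matrix.mulVec_smul, ← h, Matrix.mulVec_mulVec, Matrix.nonsing_inv_mul _ hdet,
      Matrix.one_mulVec]
  have hc : c ≠ 0 := by
    rintro rfl
    simpa using congrFun h1 ⟨0, hn⟩
  refine ⟨hc, ?_⟩
  conv_rhs => rw [h1]
  rw [smul_smul, inv_mul_cancel₀ hc, one_smul]

theorem stmt5 (n : ℕ) (hn : 0 < n) (A : Matrix (Fin n) (Fin n) ℝ)
    (hA : InSpanRS A) (hinv : IsUnit A) :
    IsUnit (partDS A) ∧ InSpanRS A⁻¹ ∧ partDS A⁻¹ = (partDS A)⁻¹ ∧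
    (InSpanDS A → InSpanDS A⁻¹) := by
  have hdet : IsUnit A.det := (Matrix.isUnit_iff_isUnit_det A).1 hinv
  obtain ⟨c, hc⟩ := hA
  obtain ⟨hc0, hB⟩ := inv_mulVec_one hn hinv hc
  have key : partDS A * partDS A⁻¹ = 1 := by
    rw [partDS_eq_of_mulVec_one hn hc, partDS_eq_of_mulVec_one hn hB]
    have hAB : A * A⁻¹ = 1 := Matrix.mul_nonsing_inv _ hdet
    have hAJ := mul_avgMat hc
    have hJJ := avgMat_mul_self hn
    have hAJB : A * (avgMat n * A⁻¹) = c • (avgMat n * A⁻¹) := by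
      rw [← Matrix.mul_assoc, hAJ, Matrix.smul_mul]
    have hJJB : avgMat n * (avgMat n * A⁻¹) = avgMat n * A⁻¹ := by
      rw [← Matrix.mul_assoc, hJJ]
    simp only [Matrix.add_mul, Matrix.sub_mul, Matrix.mul_add, Matrix.mul_sub, Matrix.mul_assoc,
      Matrix.smul_mul, Matrix.mul_smul, hAB, hAJ, hJJ, hAJB, hJJB, Matrix.mul_one]
    rw [sub_add_cancel, sub_add_cancel, inv_smul_smul₀ hc0]
    abel
  refine ⟨IsUnit.of_mul_eq_one _ key, ⟨c⁻¹, hB⟩, (Matrix.inv_eq_right_inv key).symm, ?_⟩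
  rintro ⟨d, hd, hdT⟩
  refine ⟨d⁻¹, (inv_mulVec_one hn hinv hd).2, ?_⟩
  rw [Matrix.transpose_nonsing_inv]
  exact (inv_mulVec_one hn ((Matrix.isUnit_transpose A).2 hinv) hdT).2
end

section
/- Let m ≥ 2 and let ψ₁, …, ψ_m : ⟨RS_n⟩ → ⟨RS_n⟩ be maps satisfying tr(ψ₁(A₁) ψ₂(A₂) ⋯ ψ_m(A_m)) = tr(A₁ A₂ ⋯ A_m) for all A₁, …, A_m ∈ ⟨RS_n⟩. Then: (a) the maps A ↦ ψ_i(A)_DS, restricted to ⟨DS_n⟩, satisfy tr(ψ₁(A₁)_DS ⋯ ψ_m(A_m)_DS) = tr(A₁ ⋯ A_m) for all A₁, …, A_m ∈ ⟨DS_n⟩; and (b) for each i and every A ∈ ⟨RS_n⟩, ψ_i(A)_DS = ψ_i(A_DS)_DS, so that ψ_i(A) = ψ_i(A_DS)_DS + ψ_i(A)_R with ψ_i(A)_R ∈ R_n. -/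
/-!
Let `J = e eᵀ / n`. On row-sum-constant matrices (`J A J = A J`) the map `A ↦ A_DS` is
`A ↦ A - J A + A J`; it is multiplicative, preserves traces, takes values in the commutant of `J`
(which is `⟨DS_n⟩`) and fixes that commutant. Part (a) follows at once by applying it to the product
inside the trace.

For (b), fix `i`, choose `k ≠ i`, and put `B` in slot `k` and `1` in the other slots different
from `i`. By cyclicity of the trace this yields `g(B) ∈ ⟨DS_n⟩` with
`tr(ψ_i(A)_DS g(B)) = tr(A B)` for all row-sum-constant `A`, `B`. For `B ∈ ⟨DS_n⟩` the right-hand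
side depends only on `A_DS`, so `D = ψ_i(A)_DS - ψ_i(A_DS)_DS` is trace-orthogonal to every `g(B)`.
The form `tr(A B)` is nondegenerate on `⟨DS_n⟩` (test `B` against `Bᵀ`), so `g` sends a basis to a
linearly independent family, which spans `⟨DS_n⟩` by dimension. Hence `tr(D Dᵀ) = 0` and `D = 0`.
-/

open Matrix

/-- The averaging matrix `J = e eᵀ / n`, all of whose entries are `1 / n`. -/
noncomputable def avgJ (n : ℕ) : Matrix (Fin n) (Fin n) ℝ := Matrix.of fun _ _ => (n : ℝ)⁻¹

lemma avgJ_mul {n : ℕ} (A : Matrix (Fin n) (Fin n) ℝ) (i j : Fin n) :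
    (avgJ n * A) i j = (∑ k, A k j) / n := by
  simp [avgJ, Matrix.mul_apply, ← Finset.mul_sum, div_eq_inv_mul]

lemma mul_avgJ {n : ℕ} (A : Matrix (Fin n) (Fin n) ℝ) (i j : Fin n) :
    (A * avgJ n) i j = (∑ k, A i k) / n := by
  simp [avgJ, Matrix.mul_apply, ← Finset.sum_mul, div_eq_mul_inv]

lemma avgJ_sq {n : ℕ} (hn : 0 < n) : avgJ n * avgJ n = avgJ n := by
  ext i j
  rw [avgJ_mul]
  have : (n : ℝ) ≠ 0 := by positivity
  simp [avgJ, this]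

lemma InSpanRS.exists_sum {n : ℕ} {A : Matrix (Fin n) (Fin n) ℝ} (h : InSpanRS A) :
    ∃ c : ℝ, ∀ i, ∑ k, A i k = c := by
  obtain ⟨c, hc⟩ := h
  refine ⟨c, fun i => ?_⟩
  simpa [Matrix.mulVec, dotProduct] using congrFun hc i

lemma InSpanRS.of_sum {n : ℕ} {A : Matrix (Fin n) (Fin n) ℝ} {c : ℝ}
    (h : ∀ i, ∑ k, A i k = c) : InSpanRS A :=
  ⟨c, by ext i; simpa [Matrix.mulVec, dotProduct] using h i⟩

/-- Since `A J = c J`, multiplying by `J` on the left changes nothing. -/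
lemma InSpanRS.conj_avgJ {n : ℕ} (hn : 0 < n) {A : Matrix (Fin n) (Fin n) ℝ} (h : InSpanRS A) :
    avgJ n * (A * avgJ n) = A * avgJ n := by
  obtain ⟨c, hc⟩ := h.exists_sum
  have : (n : ℝ) ≠ 0 := by positivity
  ext i j
  rw [avgJ_mul]
  simp only [mul_avgJ, hc]
  simp [this]

lemma InSpanRS.partC_eq_zero {n : ℕ} (hn : 0 < n) {A : Matrix (Fin n) (Fin n) ℝ}
    (h : InSpanRS A) : partC A = 0 := by
  obtain ⟨c, hc⟩ := h.exists_sum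
  have : (n : ℝ) ≠ 0 := by positivity
  ext i j
  simp only [partC, vecMulVec_apply, cVec, sAvg, hc, Finset.sum_const, Finset.card_univ,
    Fintype.card_fin, nsmul_eq_mul, Matrix.zero_apply]
  field_simp
  ring

lemma InSpanRS.partDS_eq {n : ℕ} (hn : 0 < n) {A : Matrix (Fin n) (Fin n) ℝ}
    (h : InSpanRS A) : partDS A = A - avgJ n * A + A * avgJ n := by
  rw [partDS, h.partC_eq_zero hn]
  obtain ⟨c, hc⟩ := h.exists_sum
  have : (n : ℝ) ≠ 0 := by positivity
  ext i j
  simp only [Matrix.sub_apply, Matrix.add_apply, avgJ_mul, mul_avgJ, partR, vecMulVec_apply, rVec,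
    sAvg, hc, Finset.sum_const, Finset.card_univ, Fintype.card_fin, nsmul_eq_mul,
    Matrix.zero_apply]
  field_simp
  ring

/-- The commutant of `J`, which is `⟨DS_n⟩`: `(A J)_{ij}` is the `i`-th row average and
`(J A)_{ij}` the `j`-th column average, so they agree iff all row and column sums coincide. -/
noncomputable def commJ (n : ℕ) : Subalgebra ℝ (Matrix (Fin n) (Fin n) ℝ) :=
  Subalgebra.centralizer ℝ {avgJ n}

lemma mem_commJ {n : ℕ} {A : Matrix (Fin n) (Fin n) ℝ} :
    A ∈ commJ n ↔ avgJ n * A = A * avgJ n := by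
  simp [commJ, Subalgebra.mem_centralizer_iff]

lemma inSpanRS_of_mem_commJ {n : ℕ} (hn : 0 < n) {A : Matrix (Fin n) (Fin n) ℝ}
    (h : A ∈ commJ n) : InSpanRS A := by
  refine InSpanRS.of_sum (c := ∑ k, A k ⟨0, hn⟩) fun i => ?_
  have h1 := congrFun (congrFun (mem_commJ.1 h) i) ⟨0, hn⟩
  rw [avgJ_mul, mul_avgJ] at h1
  have : (n : ℝ) ≠ 0 := by positivity
  field_simp at h1
  exact h1.symm

lemma InSpanDS.mem_commJ {n : ℕ} {A : Matrix (Fin n) (Fin n) ℝ} (h : InSpanDS A) :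
    A ∈ commJ n := by
  obtain ⟨c, h1, h2⟩ := h
  rw [_root_.mem_commJ]
  ext i j
  rw [avgJ_mul, mul_avgJ]
  have h3 := congrFun h1 i
  have h4 := congrFun h2 j
  simp [Matrix.mulVec, dotProduct] at h3 h4
  rw [h3, h4]

lemma transpose_mem_commJ {n : ℕ} {A : Matrix (Fin n) (Fin n) ℝ} (h : A ∈ commJ n) :
    Aᵀ ∈ commJ n := by
  have hJ : (avgJ n)ᵀ = avgJ n := by ext; simp [avgJ]
  have := congrArg Matrix.transpose (mem_commJ.1 h)
  rw [Matrix.transpose_mul, Matrix.transpose_mul, hJ] at this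
  exact mem_commJ.2 this.symm

lemma InSpanRS.partDS_mem {n : ℕ} (hn : 0 < n) {A : Matrix (Fin n) (Fin n) ℝ}
    (h : InSpanRS A) : partDS A ∈ commJ n := by
  rw [mem_commJ, h.partDS_eq hn]
  have h1 := h.conj_avgJ hn
  simp only [mul_add, mul_sub, add_mul, sub_mul, mul_assoc, h1, avgJ_sq hn]
  rw [← mul_assoc (avgJ n) (avgJ n), avgJ_sq hn]
  abel

lemma partDS_of_mem_commJ {n : ℕ} (hn : 0 < n) {A : Matrix (Fin n) (Fin n) ℝ}
    (h : A ∈ commJ n) : partDS A = A := by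
  rw [(inSpanRS_of_mem_commJ hn h).partDS_eq hn, mem_commJ.1 h]
  abel

lemma InSpanRS.trace_partDS {n : ℕ} (hn : 0 < n) {A : Matrix (Fin n) (Fin n) ℝ}
    (h : InSpanRS A) : (partDS A).trace = A.trace := by
  rw [h.partDS_eq hn, Matrix.trace_add, Matrix.trace_sub, Matrix.trace_mul_comm A]
  ring

lemma InSpanRS.mul {n : ℕ} {A B : Matrix (Fin n) (Fin n) ℝ}
    (hA : InSpanRS A) (hB : InSpanRS B) : InSpanRS (A * B) := by
  obtain ⟨a, ha⟩ := hA
  obtain ⟨b, hb⟩ := hB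
  refine ⟨b * a, ?_⟩
  rw [← Matrix.mulVec_mulVec, hb, Matrix.mulVec_smul, ha, smul_smul]

lemma inSpanRS_one {n : ℕ} : InSpanRS (1 : Matrix (Fin n) (Fin n) ℝ) := ⟨1, by simp⟩

/-- Writing `A_DS = (1 - J) A + A J` and `A J = c J`, the cross terms vanish because
`(1 - J) A J = 0` and `J (1 - J) = 0`. -/
lemma InSpanRS.partDS_mul {n : ℕ} (hn : 0 < n) {A B : Matrix (Fin n) (Fin n) ℝ}
    (hA : InSpanRS A) (hB : InSpanRS B) : partDS (A * B) = partDS A * partDS B := by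
  rw [hA.partDS_eq hn, hB.partDS_eq hn, (hA.mul hB).partDS_eq hn]
  have h1 := hA.conj_avgJ hn
  have h2 := hB.conj_avgJ hn
  have h3 := avgJ_sq hn
  have hJ : ∀ X, avgJ n * (avgJ n * X) = avgJ n * X := fun X => by rw [← mul_assoc, h3]
  have hA' : ∀ X, avgJ n * (A * (avgJ n * X)) = A * (avgJ n * X) := fun X => by
    simpa only [mul_assoc] using congrArg (· * X) h1
  have hAB : A * (B * avgJ n) = A * (avgJ n * (B * avgJ n)) := by rw [h2]
  simp only [mul_add, mul_sub, add_mul, sub_mul, mul_assoc, h2, hA', hJ]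
  rw [hAB, hA']
  abel

lemma inSpanRS_list_prod {n : ℕ} (l : List (Matrix (Fin n) (Fin n) ℝ))
    (h : ∀ A ∈ l, InSpanRS A) : InSpanRS l.prod := by
  induction l with
  | nil => exact inSpanRS_one
  | cons a l ih =>
    rw [List.prod_cons]
    exact (h a (by simp)).mul (ih fun A hA => h A (by simp [hA]))

lemma partDS_list_prod {n : ℕ} (hn : 0 < n) (l : List (Matrix (Fin n) (Fin n) ℝ))
    (h : ∀ A ∈ l, InSpanRS A) : partDS l.prod = (l.map partDS).prod := by
  induction l with
  | nil => exact partDS_of_mem_commJ hn (one_mem _)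
  | cons a l ih =>
    have hl : ∀ A ∈ l, InSpanRS A := fun A hA => h A (by simp [hA])
    rw [List.prod_cons, List.map_cons, List.prod_cons, ← ih hl,
      (h a (by simp)).partDS_mul hn (inSpanRS_list_prod l hl)]

lemma trace_prod_partDS {n m : ℕ} (hn : 0 < n) (X : Fin m → Matrix (Fin n) (Fin n) ℝ)
    (h : ∀ i, InSpanRS (X i)) :
    ((List.ofFn fun i => partDS (X i)).prod).trace = ((List.ofFn X).prod).trace := by
  have hl : ∀ A ∈ List.ofFn X, InSpanRS A := by
    intro A hA
    obtain ⟨i, rfl⟩ := List.mem_ofFn.1 hA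
    exact h i
  rw [← (inSpanRS_list_prod _ hl).trace_partDS hn, partDS_list_prod hn _ hl, List.map_ofFn]
  rfl

lemma prod_ofFn_update {M : Type*} [Monoid M] {m : ℕ} (f : Fin m → M) (i : Fin m) (x : M) :
    (List.ofFn (Function.update f i x)).prod =
      ((List.ofFn f).take i).prod * x * ((List.ofFn f).drop (i + 1)).prod := by
  have : List.ofFn (Function.update f i x) = (List.ofFn f).set i x := by
    refine List.ext_getElem (by simp) fun j h1 h2 => ?_
    simp only [List.getElem_ofFn, List.getElem_set, Function.update_apply, Fin.ext_iff]
    simp only [eq_comm]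
  rw [this, List.prod_set]
  simp

/-- The product of the factors of `f` other than the `i`-th, in the cyclic order starting just
after slot `i`. -/
def restProd {M : Type*} [Monoid M] {m : ℕ} (f : Fin m → M) (i : Fin m) : M :=
  ((List.ofFn f).drop (i + 1)).prod * ((List.ofFn f).take i).prod

lemma trace_prod_update {n m : ℕ} (f : Fin m → Matrix (Fin n) (Fin n) ℝ) (i : Fin m)
    (X : Matrix (Fin n) (Fin n) ℝ) :
    ((List.ofFn (Function.update f i X)).prod).trace = (X * restProd f i).trace := by
  rw [prod_ofFn_update, mul_assoc, Matrix.trace_mul_comm, restProd, mul_assoc]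

/-- If only slot `k ≠ i` differs from `1`, the product of the factors other than the `i`-th is
the entry in slot `k`. -/
lemma restProd_update_one {M : Type*} [Monoid M] {m : ℕ} {i k : Fin m} (hik : i ≠ k) (B : M) :
    restProd (Function.update 1 k B) i = B := by
  have hmem : ∀ x ∈ List.ofFn (Function.update (1 : Fin m → M) k B), x = 1 ∨ x = B := by
    intro x hx
    obtain ⟨j, rfl⟩ := List.mem_ofFn.1 hx
    by_cases h : j = k
    · subst h; simp
    · simp [h]
  -- All factors are `1` or `B`, so they commute and the cyclic order is immaterial.
  have hcomm : ∀ x y : M, (x = 1 ∨ x = B) → (y = 1 ∨ y = B) → Commute x y := by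
    rintro x y (rfl | rfl) (rfl | rfl) <;> simp
  have h1 : Commute ((List.ofFn (Function.update (1 : Fin m → M) k B)).drop (i + 1)).prod
      ((List.ofFn (Function.update (1 : Fin m → M) k B)).take i).prod :=
    Commute.list_prod_left _ _ fun x hx => Commute.list_prod_right _ _ fun y hy =>
      hcomm x y (hmem x (List.mem_of_mem_drop hx)) (hmem y (List.mem_of_mem_take hy))
  have h2 := prod_ofFn_update (Function.update (1 : Fin m → M) k B) i 1
  have h3 : Function.update (Function.update (1 : Fin m → M) k B) i 1
      = Function.update (1 : Fin m → M) k B := by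
    rw [Function.update_eq_self_iff]
    simp [hik]
  rw [restProd, h1.eq, ← mul_one (List.prod (List.take _ _)), ← h2, h3, prod_ofFn_update]
  have h4 : List.ofFn (1 : Fin m → M) = List.replicate m 1 := List.ofFn_const m 1
  simp [h4]

/-- If `f`, `g` (with `g` valued in the transpose-closed algebra `⟨DS_n⟩`) preserve the trace form
on `⟨DS_n⟩`, then the values of `g` span `⟨DS_n⟩`, so only `0` is trace-orthogonal to all of
them. -/
lemma eq_zero_of_trace_orthogonal {n : ℕ} (f g : Matrix (Fin n) (Fin n) ℝ → Matrix (Fin n) (Fin n) ℝ)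
    (hg : ∀ B ∈ commJ n, g B ∈ commJ n)
    (hfg : ∀ A ∈ commJ n, ∀ B ∈ commJ n, (f A * g B).trace = (A * B).trace)
    (D : Matrix (Fin n) (Fin n) ℝ) (hD : D ∈ commJ n)
    (h : ∀ B ∈ commJ n, (D * g B).trace = 0) : D = 0 := by
  have nondeg : ∀ X : Matrix (Fin n) (Fin n) ℝ, (Xᵀ * X).trace = 0 → X = 0 := fun X hX => by
    rwa [← Matrix.conjTranspose_eq_transpose_of_trivial,
      Matrix.trace_conjTranspose_mul_self_eq_zero_iff] at hX
  let V := Subalgebra.toSubmodule (commJ n)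
  let b := Module.finBasis ℝ V
  let w : Fin (Module.finrank ℝ V) → V := fun k => ⟨g (b k), hg _ (b k).2⟩
  have hli : LinearIndependent ℝ w := by
    rw [Fintype.linearIndependent_iff]
    intro c hc
    let X : V := ∑ k, c k • b k
    have hX : (X : Matrix (Fin n) (Fin n) ℝ) = 0 := by
      apply nondeg
      have hmem : (X : Matrix (Fin n) (Fin n) ℝ)ᵀ ∈ commJ n := transpose_mem_commJ X.2
      have h0 : ∑ k, c k • g (b k) = 0 := by
        simpa [w] using congrArg (Subtype.val) hc
      have h1 : (X : Matrix (Fin n) (Fin n) ℝ) = ∑ k, c k • (b k : Matrix (Fin n) (Fin n) ℝ) := by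
        simp [X]
      have h2 : (f (X : Matrix (Fin n) (Fin n) ℝ)ᵀ * ∑ k, c k • g (b k)).trace = 0 := by
        rw [h0]; simp
      rw [Finset.mul_sum, Matrix.trace_sum] at h2
      nth_rewrite 2 [h1]
      rw [Finset.mul_sum, Matrix.trace_sum, ← h2]
      refine Finset.sum_congr rfl fun k _ => ?_
      rw [Matrix.mul_smul, Matrix.mul_smul, Matrix.trace_smul, Matrix.trace_smul,
        hfg _ hmem _ (b k).2]
    exact Fintype.linearIndependent_iff.1 b.linearIndependent c (Subtype.ext hX)
  have hspan : Submodule.span ℝ (Set.range w) = ⊤ :=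
    hli.span_eq_top_of_card_eq_finrank' (by simp)
  have hall : ∀ Y : V, (D * (Y : Matrix (Fin n) (Fin n) ℝ)).trace = 0 := by
    intro Y
    have hY : Y ∈ Submodule.span ℝ (Set.range w) := hspan ▸ Submodule.mem_top
    induction hY using Submodule.span_induction with
    | mem x hx =>
      obtain ⟨k, rfl⟩ := hx
      exact h _ (b k).2
    | zero => simp
    | add x y _ _ hx hy => simp [Matrix.mul_add, hx, hy]
    | smul a x _ hx => simp [hx]
  apply nondeg
  rw [Matrix.trace_mul_comm]
  exact hall ⟨Dᵀ, transpose_mem_commJ hD⟩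

lemma inRn_partR {n : ℕ} (hn : 0 < n) (A : Matrix (Fin n) (Fin n) ℝ) : InRn (partR A) := by
  refine ⟨rVec A, ?_, rfl⟩
  have : (n : ℝ) ≠ 0 := by positivity
  simp only [rVec, sAvg, Finset.sum_sub_distrib, ← Finset.sum_div, Finset.sum_const,
    Finset.card_univ, Fintype.card_fin, nsmul_eq_mul]
  rw [Finset.sum_comm]
  field_simp
  ring

theorem stmt6 (n m : ℕ) (hn : 0 < n) (hm : 2 ≤ m)
    (ψ : Fin m → Matrix (Fin n) (Fin n) ℝ → Matrix (Fin n) (Fin n) ℝ)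
    (hmap : ∀ i A, InSpanRS A → InSpanRS (ψ i A))
    (htr : ∀ A : Fin m → Matrix (Fin n) (Fin n) ℝ, (∀ i, InSpanRS (A i)) →
      ((List.ofFn fun i => ψ i (A i)).prod).trace = ((List.ofFn A).prod).trace) :
    (∀ A : Fin m → Matrix (Fin n) (Fin n) ℝ, (∀ i, InSpanDS (A i)) →
      ((List.ofFn fun i => partDS (ψ i (A i))).prod).trace = ((List.ofFn A).prod).trace) ∧
    (∀ i : Fin m, ∀ A : Matrix (Fin n) (Fin n) ℝ, InSpanRS A →
      partDS (ψ i A) = partDS (ψ i (partDS A)) ∧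
      ψ i A = partDS (ψ i (partDS A)) + partR (ψ i A) ∧
      InRn (partR (ψ i A))) := by
  refine ⟨fun A hA => ?_, fun i A hA => ?_⟩
  · have hRS : ∀ i, InSpanRS (A i) := fun i => inSpanRS_of_mem_commJ hn (hA i).mem_commJ
    rw [trace_prod_partDS hn _ fun i => hmap i _ (hRS i), htr A hRS]
  have : Nontrivial (Fin m) := Fin.nontrivial_iff_two_le.2 hm
  obtain ⟨k, hk⟩ := exists_ne i
  let U (B : Matrix (Fin n) (Fin n) ℝ) : Fin m → Matrix (Fin n) (Fin n) ℝ := Function.update 1 k B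
  have hU : ∀ B, InSpanRS B → ∀ j, InSpanRS (U B j) := by
    intro B hB j
    by_cases h : j = k
    · subst h; simpa [U] using hB
    · simpa [U, h] using inSpanRS_one
  let g (B : Matrix (Fin n) (Fin n) ℝ) : Matrix (Fin n) (Fin n) ℝ :=
    restProd (fun j => partDS (ψ j (U B j))) i
  have hg : ∀ B ∈ commJ n, g B ∈ commJ n := by
    intro B hB
    have hmem : ∀ x ∈ List.ofFn (fun j => partDS (ψ j (U B j))), x ∈ commJ n := by
      intro x hx
      obtain ⟨j, rfl⟩ := List.mem_ofFn.1 hx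
      exact (hmap j _ (hU B (inSpanRS_of_mem_commJ hn hB) j)).partDS_mem hn
    exact mul_mem (list_prod_mem fun x hx => hmem x (List.mem_of_mem_drop hx))
      (list_prod_mem fun x hx => hmem x (List.mem_of_mem_take hx))
  have key : ∀ A B, InSpanRS A → InSpanRS B → (partDS (ψ i A) * g B).trace = (A * B).trace := by
    intro A B hA hB
    have hV : ∀ j, InSpanRS (Function.update (U B) i A j) := by
      intro j
      by_cases h : j = i
      · subst h; simpa using hA
      · simpa [h] using hU B hB j
    have h1 : Function.update (fun j => partDS (ψ j (U B j))) i (partDS (ψ i A))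
        = fun j => partDS (ψ j (Function.update (U B) i A j)) := by
      ext1 j
      by_cases h : j = i
      · subst h; simp
      · simp [h]
    rw [← trace_prod_update, h1, trace_prod_partDS hn _ fun j => hmap j _ (hV j), htr _ hV,
      trace_prod_update, restProd_update_one hk.symm]
  have hPA : InSpanRS (partDS A) := inSpanRS_of_mem_commJ hn (hA.partDS_mem hn)
  have hDS : partDS (ψ i A) = partDS (ψ i (partDS A)) := by
    rw [← sub_eq_zero]
    refine eq_zero_of_trace_orthogonal (fun A => partDS (ψ i A)) g hg
      (fun A hA B hB => key A B (inSpanRS_of_mem_commJ hn hA) (inSpanRS_of_mem_commJ hn hB)) _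
      (sub_mem ((hmap i _ hA).partDS_mem hn) ((hmap i _ hPA).partDS_mem hn)) fun B hB => ?_
    have hB' := inSpanRS_of_mem_commJ hn hB
    rw [sub_mul, Matrix.trace_sub, key A B hA hB', key _ B hPA hB',
      ← (hA.mul hB').trace_partDS hn, hA.partDS_mul hn hB', partDS_of_mem_commJ hn hB, sub_self]
  refine ⟨hDS, ?_, inRn_partR hn _⟩
  rw [← hDS, partDS, (hmap i A hA).partC_eq_zero hn]
  abel
end
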